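/- (Weighted face count over a dual face.) Let n = dim V. For every face A∨ of the dual arrangement H∨ and every face B of H: Σ_{B∨} (−1)^{n − dim B∨} = 1 if B ⊆ V(A∨) and = 0 otherwise, where the sum ranges over the finitely many faces B∨ of H∨ such that A∨ ≤ B∨ and B ⊆ U(B∨). -/

import Mathlib

/-! Basic notions for a (central, essential) arrangement of hyperplanes `H`
in a finite-dimensional real vector space, its faces, flats, the dual
arrangement and its faces, and the big/small dual cones. -/

/-- Two points `x`, `y` lie in the same face of the hyperplane arrangement `H`:
for every hyperplane `W ∈ H` and every linear functional `f` with kernel `W`,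
either `f x · f y > 0` or `f x = f y = 0`. -/
def SameFace {V : Type*} [AddCommGroup V] [Module ℝ V]
    (H : Finset (Submodule ℝ V)) (x y : V) : Prop :=
  ∀ W ∈ H, ∀ f : V →ₗ[ℝ] ℝ, LinearMap.ker f = W →
    (0 < f x * f y ∨ (f x = 0 ∧ f y = 0))

/-- A face of the arrangement `H`: an equivalence class of the relation `SameFace`. -/
def IsFace {V : Type*} [AddCommGroup V] [Module ℝ V]
    (H : Finset (Submodule ℝ V)) (A : Set V) : Prop :=
  ∃ x : V, A = {y | SameFace H x y}

/-- A chamber is an open face. -/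
def IsChamber {V : Type*} [AddCommGroup V] [Module ℝ V] [TopologicalSpace V]
    (H : Finset (Submodule ℝ V)) (A : Set V) : Prop :=
  IsFace H A ∧ IsOpen A

/-- A flat of `H`: an intersection of a subfamily of the hyperplanes
(the empty subfamily gives all of `V`). -/
def IsFlat {V : Type*} [AddCommGroup V] [Module ℝ V]
    (H : Finset (Submodule ℝ V)) (L : Submodule ℝ V) : Prop :=
  ∃ J : Finset (Submodule ℝ V), J ⊆ H ∧ L = J.inf id

/-- Two (continuous) linear functionals `f`, `g` lie in the same face of the dual
arrangement `H∨`: for every 1-dimensional flat `l` of `H` and every `x ∈ l`,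
either `f x · g x > 0` or `f x = g x = 0`. -/
def DualSameFace {V : Type*} [NormedAddCommGroup V] [NormedSpace ℝ V]
    (H : Finset (Submodule ℝ V)) (f g : V →L[ℝ] ℝ) : Prop :=
  ∀ l : Submodule ℝ V, IsFlat H l → Module.finrank ℝ l = 1 →
    ∀ x ∈ l, (0 < f x * g x ∨ (f x = 0 ∧ g x = 0))

/-- A face of the dual arrangement `H∨` in the dual space. -/
def IsDualFace {V : Type*} [NormedAddCommGroup V] [NormedSpace ℝ V]
    (H : Finset (Submodule ℝ V)) (A : Set (V →L[ℝ] ℝ)) : Prop :=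
  ∃ f : V →L[ℝ] ℝ, A = {g | DualSameFace H f g}

/-- A chamber of the dual arrangement: an open dual face. -/
def IsDualChamber {V : Type*} [NormedAddCommGroup V] [NormedSpace ℝ V]
    (H : Finset (Submodule ℝ V)) (A : Set (V →L[ℝ] ℝ)) : Prop :=
  IsDualFace H A ∧ IsOpen A

/-- The big dual cone `U(A∨)` of a dual face `A∨`. -/
def bigCone {V : Type*} [NormedAddCommGroup V] [NormedSpace ℝ V]
    (A : Set (V →L[ℝ] ℝ)) : Set V :=
  {x | ∀ f ∈ A, 0 ≤ f x}

/-- The small dual cone `V(A∨)` of a dual face `A∨`: the intersection of the big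
dual cones of all dual chambers `B∨` with `A∨ ≤ B∨`. -/
def smallCone {V : Type*} [NormedAddCommGroup V] [NormedSpace ℝ V]
    (H : Finset (Submodule ℝ V)) (A : Set (V →L[ℝ] ℝ)) : Set V :=
  ⋂ B ∈ {B : Set (V →L[ℝ] ℝ) | IsDualChamber H B ∧ A ⊆ closure B}, bigCone B

/-!
Give a relatively open convex set `S` the weight `(-1) ^ dim S`, and the empty set the weight `0`.
A hyperplane that properly cuts `S` leaves two pieces of the same dimension and one of dimension one
less, so the weight is additive when `S` is cut by finitely many hyperplanes.

Pick `a ∈ A∨` and a face `B` of `H`. The faces `B∨ ≥ A∨` tile the open star of `A∨`. As the closure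
of `B` is a pointed polyhedral cone generated by its extreme rays, which lie on one-dimensional
flats, `B ⊆ U(B∨)` means that no ray of `B` is negative on `B∨`. Inclusion–exclusion over the set
`t` of rays on which a functional is negative reduces the sum to the weights of the regions
`{f in the star | f < 0 on t}`. Such a region is open and convex, hence of weight `(-1) ^ n` unless
it is empty, and it is nonempty exactly when `a ≤ 0` on `t`: subtract from `a` a small multiple of a
functional positive on all rays of `B`. The alternating sum over the sets `t` of rays with `a ≤ 0`
vanishes unless `a > 0` on every ray of `B`, which is the condition `B ⊆ V(A∨)` since the points of
the chambers above `A∨` are dense in the star.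
-/

open Classical in
/-- The Euler characteristic with compact supports of a relatively open convex subset of a linear
subspace: `(-1) ^ dim S` if `S` is nonempty and `0` otherwise. The dimension is that of the linear
span. -/
noncomputable def cellEuler {E : Type*} [AddCommGroup E] [Module ℝ E] (S : Set E) : ℤ :=
  if S.Nonempty then (-1) ^ Module.finrank ℝ (Submodule.span ℝ S) else 0

@[simp]
lemma cellEuler_empty {E : Type*} [AddCommGroup E] [Module ℝ E] : cellEuler (∅ : Set E) = 0 :=
  if_neg Set.not_nonempty_empty

lemma neg_one_pow_codim_eq_mul_cellEuler {E : Type*} [AddCommGroup E] [Module ℝ E]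
    [FiniteDimensional ℝ E] {C : Set E} (hC : C.Nonempty) :
    (-1) ^ (Module.finrank ℝ E - Module.finrank ℝ (Submodule.span ℝ C)) =
      (-1) ^ Module.finrank ℝ E * cellEuler C := by
  obtain ⟨k, hk⟩ := Nat.exists_eq_add_of_le (Submodule.finrank_le (Submodule.span ℝ C))
  rw [cellEuler, if_pos hC, hk, Nat.add_sub_cancel_left, pow_add, mul_right_comm, ← mul_pow,
    neg_one_mul, neg_neg, one_pow, one_mul]

section SignCells

variable {E ι : Type*} [AddCommGroup E] [Module ℝ E] [TopologicalSpace E]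

/-- The sign vector of a point with respect to a family of linear functionals. -/
noncomputable def signVector (φ : ι → E →L[ℝ] ℝ) (x : E) : ι → SignType :=
  fun i => SignType.sign (φ i x)

/-- The cell of points with a prescribed sign vector. The nonempty cells are the faces of the
arrangement of the kernels of the functionals. -/
def signCell (φ : ι → E →L[ℝ] ℝ) (σ : ι → SignType) : Set E :=
  {x | signVector φ x = σ}

/-- The open star of the face containing `a`: the union of the faces whose closure contains `a`. -/
def openStar (φ : ι → E →L[ℝ] ℝ) (a : E) : Set E :=
  {x | ∀ i, φ i a ≠ 0 → SignType.sign (φ i x) = SignType.sign (φ i a)}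

/-- Relatively open convex subsets of linear subspaces, the class of sets on which
`cellEuler` is well behaved. -/
def IsRelOpenConvex (S : Set E) : Prop :=
  ∃ (W : Submodule ℝ E) (P : Set E), IsOpen P ∧ Convex ℝ P ∧ S = (W : Set E) ∩ P

lemma isOpen_setOf_sign_eq (φ : E →L[ℝ] ℝ) {s : SignType} (hs : s ≠ 0) :
    IsOpen {x | SignType.sign (φ x) = s} := by
  cases s
  · exact absurd rfl hs
  · simpa only [SignType.neg_eq_neg_one, sign_eq_neg_one_iff] using
      isOpen_lt φ.continuous continuous_const
  · simpa only [SignType.pos_eq_one, sign_eq_one_iff] using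
      isOpen_lt continuous_const φ.continuous

lemma convex_setOf_sign_eq (φ : E →L[ℝ] ℝ) (s : SignType) :
    Convex ℝ {x | SignType.sign (φ x) = s} := by
  have hφ : IsLinearMap ℝ φ := φ.toLinearMap.isLinear
  cases s
  · simpa only [SignType.zero_eq_zero, sign_eq_zero_iff] using convex_hyperplane hφ 0
  · simpa only [SignType.neg_eq_neg_one, sign_eq_neg_one_iff] using convex_halfSpace_lt hφ 0
  · simpa only [SignType.pos_eq_one, sign_eq_one_iff] using convex_halfSpace_gt hφ 0

lemma openStar_eq_iInter (φ : ι → E →L[ℝ] ℝ) (a : E) :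
    openStar φ a =
      ⋂ (i) (_ : φ i a ≠ 0), {x | SignType.sign (φ i x) = SignType.sign (φ i a)} := by
  ext x
  simp only [openStar, Set.mem_iInter, Set.mem_ofPred_eq]

lemma isOpen_openStar [Finite ι] (φ : ι → E →L[ℝ] ℝ) (a : E) : IsOpen (openStar φ a) := by
  rw [openStar_eq_iInter]
  exact isOpen_iInter_of_finite fun i => isOpen_iInter_of_finite fun h =>
    isOpen_setOf_sign_eq (φ i) (sign_ne_zero.2 h)

lemma convex_openStar (φ : ι → E →L[ℝ] ℝ) (a : E) : Convex ℝ (openStar φ a) := by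
  rw [openStar_eq_iInter]
  exact convex_iInter₂ fun i _ => convex_setOf_sign_eq (φ i) _

lemma self_mem_openStar (φ : ι → E →L[ℝ] ℝ) (a : E) : a ∈ openStar φ a :=
  fun _ _ => rfl

lemma mem_openStar_congr {φ : ι → E →L[ℝ] ℝ} {a x y : E} (h : signVector φ x = signVector φ y) :
    x ∈ openStar φ a ↔ y ∈ openStar φ a :=
  forall₂_congr fun i _ => by rw [show SignType.sign (φ i x) = _ from congrFun h i]; rfl

lemma signCell_eq_openStar {φ : ι → E →L[ℝ] ℝ} {a : E} (ha : ∀ i, φ i a ≠ 0) :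
    signCell φ (signVector φ a) = openStar φ a := by
  ext x
  exact funext_iff.trans (forall_congr' fun i => ⟨fun h _ => h, fun h => h (ha i)⟩)

namespace IsRelOpenConvex

lemma of_isOpen {P : Set E} (hP : IsOpen P) (hc : Convex ℝ P) : IsRelOpenConvex P :=
  ⟨⊤, P, hP, hc, by rw [Submodule.top_coe, Set.univ_inter]⟩

lemma convex {S : Set E} (hS : IsRelOpenConvex S) : Convex ℝ S := by
  obtain ⟨W, P, -, hc, rfl⟩ := hS
  exact W.convex.inter hc

lemma inter_isOpen {S P : Set E} (hS : IsRelOpenConvex S) (hP : IsOpen P) (hc : Convex ℝ P) :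
    IsRelOpenConvex (S ∩ P) := by
  obtain ⟨W, Q, hQ, hQc, rfl⟩ := hS
  exact ⟨W, Q ∩ P, hQ.inter hP, hQc.inter hc, Set.inter_assoc _ _ _⟩

lemma inter_sign {S : Set E} (hS : IsRelOpenConvex S) (φ : E →L[ℝ] ℝ) (s : SignType) :
    IsRelOpenConvex (S ∩ {x | SignType.sign (φ x) = s}) := by
  by_cases hs : s = 0
  · subst hs
    obtain ⟨W, P, hP, hc, rfl⟩ := hS
    refine ⟨W ⊓ φ.ker, P, hP, hc, ?_⟩
    ext x
    simp [sign_eq_zero_iff, and_right_comm]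
  · exact hS.inter_isOpen (isOpen_setOf_sign_eq φ hs) (convex_setOf_sign_eq φ s)

end IsRelOpenConvex

section Perturbation

variable [ContinuousAdd E] [ContinuousSMul ℝ E]

lemma exists_pos_add_smul_mem {P : Set E} (hP : IsOpen P) {x : E} (hx : x ∈ P) (w : E) :
    ∃ t : ℝ, 0 < t ∧ x + t • w ∈ P := by
  have hcont : Continuous fun t : ℝ => x + t • w := by fun_prop
  have hnear : ∀ᶠ t in nhdsWithin (0 : ℝ) (Set.Ioi 0), x + t • w ∈ P :=
    hcont.continuousWithinAt.eventually_mem (hP.mem_nhds (by simpa using hx))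
  exact (eventually_mem_nhdsWithin.and hnear).exists

lemma signCell_subset_closure_signCell_iff [Finite ι] (φ : ι → E →L[ℝ] ℝ) (a x : E) :
    signCell φ (signVector φ a) ⊆ closure (signCell φ (signVector φ x)) ↔ x ∈ openStar φ a := by
  constructor
  · intro h
    obtain ⟨y, hya, hyx⟩ :=
      mem_closure_iff.1 (h rfl) _ (isOpen_openStar φ a) (self_mem_openStar φ a)
    exact (mem_openStar_congr hyx).1 hya
  · intro hx b hb
    have hsign (t : ℝ) (ht : 0 < t) : b + t • x ∈ signCell φ (signVector φ x) := by
      funext i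
      have hbi : SignType.sign (φ i b) = SignType.sign (φ i a) := congrFun hb i
      simp only [signVector, map_add, map_smul, smul_eq_mul]
      rcases lt_trichotomy (φ i a) 0 with ha | ha | ha
      · have hxi := hx i ha.ne
        rw [sign_neg ha, sign_eq_neg_one_iff] at hbi hxi
        rw [sign_neg hxi, sign_neg (add_neg hbi (mul_neg_of_pos_of_neg ht hxi))]
      · rw [ha, sign_zero, sign_eq_zero_iff] at hbi
        rw [hbi, zero_add, sign_mul, sign_pos ht, one_mul]
      · have hxi := hx i ha.ne'
        rw [sign_pos ha, sign_eq_one_iff] at hbi hxi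
        rw [sign_pos hxi, sign_pos (add_pos hbi (mul_pos ht hxi))]
    refine mem_closure_iff.2 fun o ho hbo => ?_
    obtain ⟨t, ht, hto⟩ := exists_pos_add_smul_mem ho hbo x
    exact ⟨_, hto, hsign t ht⟩

lemma span_submodule_inter_isOpen (W : Submodule ℝ E) {P : Set E} (hP : IsOpen P)
    (hne : ((W : Set E) ∩ P).Nonempty) : Submodule.span ℝ ((W : Set E) ∩ P) = W := by
  refine le_antisymm (Submodule.span_le.2 Set.inter_subset_left) fun w hw => ?_
  obtain ⟨x, hxW, hxP⟩ := hne
  obtain ⟨t, ht, hxt⟩ := exists_pos_add_smul_mem hP hxP w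
  have hx : x ∈ Submodule.span ℝ ((W : Set E) ∩ P) := Submodule.subset_span ⟨hxW, hxP⟩
  have hxw : x + t • w ∈ Submodule.span ℝ ((W : Set E) ∩ P) :=
    Submodule.subset_span ⟨W.add_mem hxW (W.smul_mem t hw), hxt⟩
  exact (Submodule.smul_mem_iff _ ht.ne').1 ((Submodule.add_mem_iff_right _ hx).1 hxw)

lemma cellEuler_submodule_inter_isOpen (W : Submodule ℝ E) {P : Set E} (hP : IsOpen P)
    (hne : ((W : Set E) ∩ P).Nonempty) :
    cellEuler ((W : Set E) ∩ P) = (-1) ^ Module.finrank ℝ W := by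
  rw [cellEuler, if_pos hne, span_submodule_inter_isOpen W hP hne]

lemma cellEuler_of_isOpen {P : Set E} (hP : IsOpen P) (hne : P.Nonempty) :
    cellEuler P = (-1) ^ Module.finrank ℝ E := by
  simpa using cellEuler_submodule_inter_isOpen ⊤ hP (by simpa using hne)

end Perturbation

lemma sum_cellEuler_inter_sign_of_forall_sign_eq {S : Set E} (φ : E →L[ℝ] ℝ) {s₀ : SignType}
    (hS : ∀ x ∈ S, SignType.sign (φ x) = s₀) :
    ∑ s, cellEuler (S ∩ {x | SignType.sign (φ x) = s}) = cellEuler S := by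
  have hfull : S ∩ {x | SignType.sign (φ x) = s₀} = S := Set.inter_eq_left.2 hS
  rw [Fintype.sum_eq_single s₀, hfull]
  intro s hs
  have hempty : S ∩ {x | SignType.sign (φ x) = s} = ∅ :=
    Set.eq_empty_of_forall_notMem fun x hx => hs (hx.2.symm.trans (hS x hx.1))
  rw [hempty, cellEuler_empty]

lemma sum_cellEuler_inter_signCell_comp_equiv {κ : Type*} [Fintype ι] [DecidableEq ι] [Fintype κ]
    [DecidableEq κ] (S : Set E) (φ : ι → E →L[ℝ] ℝ) (e : κ ≃ ι) :
    ∑ σ, cellEuler (S ∩ signCell (φ ∘ e) σ) = ∑ σ, cellEuler (S ∩ signCell φ σ) := by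
  rw [← (e.arrowCongr (Equiv.refl SignType)).sum_comp]
  refine Finset.sum_congr rfl fun σ _ => ?_
  congr 2
  ext x
  exact (e.eq_comp_symm (signVector φ x) σ).symm

lemma isOpen_setOf_forall_mem_neg (φ : ι → E →L[ℝ] ℝ) (t : Finset ι) :
    IsOpen {x | ∀ j ∈ t, φ j x < 0} := by
  simp only [Set.ofPred_forall]
  exact isOpen_biInter_finset fun j _ => isOpen_lt (φ j).continuous continuous_const

lemma convex_setOf_forall_mem_neg (φ : ι → E →L[ℝ] ℝ) (t : Finset ι) :
    Convex ℝ {x | ∀ j ∈ t, φ j x < 0} := by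
  simp only [Set.ofPred_forall]
  exact convex_iInter₂ fun j _ => convex_halfSpace_lt (φ j).toLinearMap.isLinear 0

end SignCells

lemma finrank_inf_ker_add_one {K E : Type*} [Field K] [AddCommGroup E] [Module K E]
    (W : Submodule K E) [FiniteDimensional K W] {φ : E →ₗ[K] K} {w : E} (hw : w ∈ W)
    (hφw : φ w ≠ 0) :
    Module.finrank K ↥(W ⊓ φ.ker) + 1 = Module.finrank K W := by
  have hne : (φ.domRestrict W : Module.Dual K W) ≠ 0 :=
    fun h => hφw (LinearMap.congr_fun h ⟨w, hw⟩)
  rw [← Module.Dual.finrank_ker_add_one_of_ne_zero hne, LinearMap.ker_domRestrict,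
    ← Submodule.finrank_map_subtype_eq, Submodule.map_comap_subtype]

section EulerRelation

variable {E ι : Type*} [AddCommGroup E] [Module ℝ E] [TopologicalSpace E] [ContinuousAdd E]
  [ContinuousSMul ℝ E]

lemma exists_apply_eq_zero_of_sign_ne {S : Set E} (hS : Convex ℝ S) (φ : E →L[ℝ] ℝ)
    {x y : E} (hx : x ∈ S) (hy : y ∈ S) (h : SignType.sign (φ x) ≠ SignType.sign (φ y)) :
    ∃ z ∈ S, φ z = 0 := by
  wlog hxy : φ x ≤ φ y generalizing x y
  · exact this hy hx h.symm (le_of_not_ge hxy)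
  have hx0 : φ x ≤ 0 := by
    by_contra! hpos
    exact h ((sign_pos hpos).trans (sign_pos (hpos.trans_le hxy)).symm)
  have hy0 : 0 ≤ φ y := by
    by_contra! hneg
    exact h ((sign_neg (hxy.trans_lt hneg)).trans (sign_neg hneg).symm)
  exact hS.isPreconnected.intermediate_value hx hy φ.continuous.continuousOn ⟨hx0, hy0⟩

/-- A wall crossing the cell cuts it into two pieces of the same dimension `d` and one of dimension
`d - 1`, and `(-1) ^ d + (-1) ^ d + (-1) ^ (d - 1) = (-1) ^ d`. -/
lemma sum_cellEuler_inter_sign_of_apply_eq_zero [FiniteDimensional ℝ E] {W : Submodule ℝ E}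
    {P : Set E} (hP : IsOpen P) {φ : E →L[ℝ] ℝ} {w x : E} (hw : w ∈ W) (hφw : φ w ≠ 0)
    (hxW : x ∈ W) (hxP : x ∈ P) (hx : φ x = 0) :
    ∑ s, cellEuler ((W : Set E) ∩ P ∩ {y | SignType.sign (φ y) = s}) =
      cellEuler ((W : Set E) ∩ P) := by
  have hside (s : SignType) (hs : s ≠ 0) :
      cellEuler ((W : Set E) ∩ P ∩ {y | SignType.sign (φ y) = s}) =
        (-1) ^ Module.finrank ℝ W := by
    obtain ⟨t, ht, htP⟩ := exists_pos_add_smul_mem hP hxP (((s : ℝ) * φ w) • w)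
    have hsign : SignType.sign (φ (x + t • ((s : ℝ) * φ w) • w)) = s := by
      have hsq : 0 < φ w * φ w := mul_self_pos.2 hφw
      simp only [map_add, map_smul, hx, zero_add, smul_eq_mul, mul_assoc, sign_mul, sign_pos ht,
        one_mul]
      rw [← sign_mul (φ w), sign_pos hsq, mul_one]
      cases s <;> simp
    rw [Set.inter_assoc]
    exact cellEuler_submodule_inter_isOpen W (hP.inter (isOpen_setOf_sign_eq φ hs))
      ⟨_, W.add_mem hxW (W.smul_mem _ (W.smul_mem _ hw)), htP, hsign⟩
  have hwall : cellEuler ((W : Set E) ∩ P ∩ {y | SignType.sign (φ y) = 0}) =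
      (-1) ^ Module.finrank ℝ ↥(W ⊓ φ.ker) := by
    have hset : (W : Set E) ∩ P ∩ {y | SignType.sign (φ y) = 0} =
        ((W ⊓ φ.ker : Submodule ℝ E) : Set E) ∩ P := by
      ext y
      simp [sign_eq_zero_iff, and_right_comm]
    rw [hset]
    exact cellEuler_submodule_inter_isOpen _ hP ⟨x, ⟨hxW, hx⟩, hxP⟩
  have huniv : (Finset.univ : Finset SignType) = {0, -1, 1} := rfl
  rw [huniv, Finset.sum_insert (by decide), Finset.sum_pair (by decide), hwall,
    hside _ (by decide), hside _ (by decide), cellEuler_submodule_inter_isOpen W hP ⟨x, hxW, hxP⟩,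
    ← finrank_inf_ker_add_one W hw (φ := φ) hφw]
  ring

lemma sum_cellEuler_inter_sign [FiniteDimensional ℝ E] {S : Set E} (hS : IsRelOpenConvex S)
    (φ : E →L[ℝ] ℝ) :
    ∑ s, cellEuler (S ∩ {x | SignType.sign (φ x) = s}) = cellEuler S := by
  by_cases hconst : ∀ x ∈ S, ∀ y ∈ S, SignType.sign (φ x) = SignType.sign (φ y)
  · rcases S.eq_empty_or_nonempty with rfl | ⟨y, hy⟩
    · simp
    · exact sum_cellEuler_inter_sign_of_forall_sign_eq φ fun x hx => hconst x hx y hy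
  · push Not at hconst
    obtain ⟨x, hx, y, hy, hxy⟩ := hconst
    obtain ⟨z, hzS, hz⟩ := exists_apply_eq_zero_of_sign_ne hS.convex φ hx hy hxy
    obtain ⟨W, P, hP, -, rfl⟩ := hS
    obtain ⟨w, hw, hφw⟩ : ∃ w ∈ W, φ w ≠ 0 := by
      by_contra! h
      exact hxy (by rw [h x hx.1, h y hy.1])
    exact sum_cellEuler_inter_sign_of_apply_eq_zero hP hw hφw hzS.1 hzS.2 hz

lemma sum_cellEuler_inter_signCell_option [FiniteDimensional ℝ E] [Fintype ι] [DecidableEq ι]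
    {S : Set E} (hS : IsRelOpenConvex S) (φ : Option ι → E →L[ℝ] ℝ)
    (ih : ∀ T : Set E, IsRelOpenConvex T →
      ∑ σ, cellEuler (T ∩ signCell (φ ∘ some) σ) = cellEuler T) :
    ∑ σ, cellEuler (S ∩ signCell φ σ) = cellEuler S := by
  rw [← Equiv.piOptionEquivProd.symm.sum_comp, Fintype.sum_prod_type,
    ← sum_cellEuler_inter_sign hS (φ none)]
  refine Finset.sum_congr rfl fun s _ => ?_
  rw [← ih _ (hS.inter_sign (φ none) s)]
  refine Finset.sum_congr rfl fun σ _ => ?_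
  rw [Set.inter_assoc]
  congr 2
  ext x
  exact funext_iff.trans (Option.forall.trans (and_congr_right' funext_iff.symm))

theorem sum_cellEuler_inter_signCell [FiniteDimensional ℝ E] [Fintype ι] [DecidableEq ι]
    {S : Set E} (hS : IsRelOpenConvex S) (φ : ι → E →L[ℝ] ℝ) :
    ∑ σ, cellEuler (S ∩ signCell φ σ) = cellEuler S := by
  revert S φ
  refine Fintype.induction_empty_option
    (P := fun κ _ => ∀ [DecidableEq κ] {S : Set E}, IsRelOpenConvex S → ∀ φ : κ → E →L[ℝ] ℝ,
      ∑ σ, cellEuler (S ∩ signCell φ σ) = cellEuler S) ?_ ?_ ?_ ι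
  · intro κ κ' _ e ih _ S hS φ
    classical
    let : Fintype κ := Fintype.ofEquiv κ' e.symm
    rw [← sum_cellEuler_inter_signCell_comp_equiv S φ e, ← ih hS (φ ∘ e)]
  · intro _ S _ φ
    have hcell (σ) : signCell φ σ = Set.univ := Set.eq_univ_of_forall fun _ => Subsingleton.elim _ _
    simp [hcell]
  · intro κ _ ih _ S hS φ
    classical
    convert sum_cellEuler_inter_signCell_option hS φ fun T hT => ih hT (φ ∘ some)
lemma cellEuler_openStar_inter_setOf_forall_mem_neg [Finite ι] (φ : ι → E →L[ℝ] ℝ) {a e : E}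
    {t : Finset ι} (he : ∀ j ∈ t, 0 < φ j e) :
    cellEuler (openStar φ a ∩ {x | ∀ j ∈ t, φ j x < 0}) =
      if ∀ j ∈ t, φ j a ≤ 0 then (-1) ^ Module.finrank ℝ E else 0 := by
  split_ifs with ha
  · obtain ⟨s, hs, hstar⟩ :=
      exists_pos_add_smul_mem (isOpen_openStar φ a) (self_mem_openStar φ a) (-e)
    refine cellEuler_of_isOpen ((isOpen_openStar φ a).inter (isOpen_setOf_forall_mem_neg φ t))
      ⟨_, hstar, fun j hj => ?_⟩
    have hpos : 0 < s * φ j e := mul_pos hs (he j hj)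
    simpa using (ha j hj).trans_lt hpos
  · push Not at ha
    obtain ⟨j, hj, hja⟩ := ha
    have hempty : openStar φ a ∩ {x | ∀ j ∈ t, φ j x < 0} = ∅ := by
      refine Set.eq_empty_of_forall_notMem fun x hx => ?_
      have hxj := hx.1 j hja.ne'
      rw [sign_pos hja, sign_eq_one_iff] at hxj
      exact hxj.not_gt (hx.2 j hj)
    rw [hempty, cellEuler_empty]

end EulerRelation

section InclusionExclusion

variable {E ι : Type*} [AddCommGroup E] [Module ℝ E] [TopologicalSpace E] [ContinuousAdd E]
  [ContinuousSMul ℝ E] [FiniteDimensional ℝ E] [Fintype ι] [DecidableEq ι]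

lemma sum_cellEuler_inter_signCell_of_forall_mem_eq_neg_one {S : Set E} (hS : IsRelOpenConvex S)
    (φ : ι → E →L[ℝ] ℝ) (t : Finset ι) :
    ∑ σ with ∀ j ∈ t, σ j = -1, cellEuler (S ∩ signCell φ σ) =
      cellEuler (S ∩ {x | ∀ j ∈ t, φ j x < 0}) := by
  rw [← sum_cellEuler_inter_signCell (hS.inter_isOpen (isOpen_setOf_forall_mem_neg φ t)
    (convex_setOf_forall_mem_neg φ t)) φ, Finset.sum_filter]
  refine Finset.sum_congr rfl fun σ _ => ?_
  have hneg {x : E} (hx : x ∈ signCell φ σ) (j : ι) : φ j x < 0 ↔ σ j = -1 := by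
    rw [← sign_eq_neg_one_iff, ← congrFun hx j]; rfl
  split_ifs with h
  · congr 1
    ext x
    exact ⟨fun hx => ⟨⟨hx.1, fun j hj => (hneg hx.2 j).2 (h j hj)⟩, hx.2⟩, fun hx => ⟨hx.1.1, hx.2⟩⟩
  · have hempty : S ∩ {x | ∀ j ∈ t, φ j x < 0} ∩ signCell φ σ = ∅ :=
      Set.eq_empty_of_forall_notMem fun x hx => h fun j hj => (hneg hx.2 j).1 (hx.1.2 j hj)
    rw [hempty, cellEuler_empty]

lemma sum_cellEuler_inter_signCell_of_forall_mem_ne_neg_one {S : Set E} (hS : IsRelOpenConvex S)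
    (φ : ι → E →L[ℝ] ℝ) (J : Finset ι) :
    ∑ σ with ∀ j ∈ J, σ j ≠ -1, cellEuler (S ∩ signCell φ σ) =
      ∑ t ∈ J.powerset, (-1) ^ t.card * cellEuler (S ∩ {x | ∀ j ∈ t, φ j x < 0}) := by
  have hinf (t : Finset ι) : (t.inf fun j => Finset.univ.filter fun σ : ι → SignType => σ j = -1) =
      Finset.univ.filter fun σ => ∀ j ∈ t, σ j = -1 := by
    ext σ; simp [Finset.mem_inf]
  have hinfCompl : (J.inf fun j => (Finset.univ.filter fun σ : ι → SignType => σ j = -1)ᶜ) =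
      Finset.univ.filter fun σ => ∀ j ∈ J, σ j ≠ -1 := by
    ext σ; simp [Finset.mem_inf]
  rw [← hinfCompl, Finset.inclusion_exclusion_sum_inf_compl]
  refine Finset.sum_congr rfl fun t _ => ?_
  rw [hinf, sum_cellEuler_inter_signCell_of_forall_mem_eq_neg_one hS, smul_eq_mul]

theorem sum_cellEuler_openStar_inter_signCell (φ : ι → E →L[ℝ] ℝ) (a : E) {e : E} {J : Finset ι}
    (he : ∀ j ∈ J, 0 < φ j e) :
    ∑ σ with ∀ j ∈ J, σ j ≠ -1, cellEuler (openStar φ a ∩ signCell φ σ) =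
      if ∀ j ∈ J, 0 < φ j a then (-1) ^ Module.finrank ℝ E else 0 := by
  have hterm : ∀ t ∈ J.powerset,
      (-1) ^ t.card * cellEuler (openStar φ a ∩ {x | ∀ j ∈ t, φ j x < 0}) =
        if ∀ j ∈ t, φ j a ≤ 0 then (-1) ^ t.card * (-1) ^ Module.finrank ℝ E else 0 := by
    intro t ht
    rw [cellEuler_openStar_inter_setOf_forall_mem_neg φ fun j hj =>
      he j (Finset.mem_powerset.1 ht hj), mul_ite, mul_zero]
    congr
  have hpow : (J.powerset.filter fun t => ∀ j ∈ t, φ j a ≤ 0) =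
      (J.filter fun j => φ j a ≤ 0).powerset := by
    ext t
    simp only [Finset.mem_filter, Finset.mem_powerset, Finset.subset_iff, forall_and]
  have hempty : (J.filter fun j => φ j a ≤ 0) = ∅ ↔ ∀ j ∈ J, 0 < φ j a := by
    simp only [Finset.filter_eq_empty_iff, not_le]
  rw [sum_cellEuler_inter_signCell_of_forall_mem_ne_neg_one
    (.of_isOpen (isOpen_openStar φ a) (convex_openStar φ a)), Finset.sum_congr rfl hterm,
    ← Finset.sum_filter, hpow, ← Finset.sum_mul, Finset.sum_powerset_neg_one_pow_card]
  simp only [hempty, ite_mul, one_mul, zero_mul]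

end InclusionExclusion

lemma sum_cellEuler_eq_sum_signCell {E ι : Type*} [AddCommGroup E] [Module ℝ E]
    [TopologicalSpace E] (φ : ι → E →L[ℝ] ℝ) {P : Set E} {F : Finset (Set E)}
    {S : Finset (ι → SignType)}
    (hF : ∀ C, C ∈ F ↔ C.Nonempty ∧ ∃ σ ∈ S, C = P ∩ signCell φ σ) :
    ∑ C ∈ F, cellEuler C = ∑ σ ∈ S, cellEuler (P ∩ signCell φ σ) := by
  classical
  have hne {σ} (h : cellEuler (P ∩ signCell φ σ) ≠ 0) : (P ∩ signCell φ σ).Nonempty := by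
    contrapose! h
    rw [h, cellEuler_empty]
  have himage : F = (S.filter fun σ => (P ∩ signCell φ σ).Nonempty).image
      fun σ => P ∩ signCell φ σ := by
    ext C
    rw [hF, Finset.mem_image]
    constructor
    · rintro ⟨hC, σ, hσ, rfl⟩
      exact ⟨σ, Finset.mem_filter.2 ⟨hσ, hC⟩, rfl⟩
    · rintro ⟨σ, hσ, rfl⟩
      exact ⟨(Finset.mem_filter.1 hσ).2, σ, (Finset.mem_filter.1 hσ).1, rfl⟩
  rw [himage, Finset.sum_image, Finset.sum_filter_of_ne fun _ _ => hne]
  intro σ hσ τ _ hστ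
  obtain ⟨x, hx⟩ := (Finset.mem_filter.1 hσ).2
  have hxτ : x ∈ P ∩ signCell φ τ := (Set.ext_iff.1 hστ x).1 hx
  exact hx.2.symm.trans hxτ.2

lemma dense_setOf_forall_apply_ne_zero {E ι : Type*} [AddCommGroup E] [Module ℝ E]
    [TopologicalSpace E] [IsTopologicalAddGroup E] [ContinuousSMul ℝ E] [BaireSpace E]
    [Countable ι] {φ : ι → E →L[ℝ] ℝ} (hφ : ∀ i, φ i ≠ 0) : Dense {x | ∀ i, φ i x ≠ 0} := by
  rw [Set.ofPred_forall]
  refine dense_iInter_of_isOpen (fun i => isOpen_ne_fun (φ i).continuous continuous_const)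
    fun i => ?_
  exact (dense_compl_singleton (0 : ℝ)).preimage ((φ i).isOpenMap_of_ne_zero (hφ i))

section ExtremeRays

variable {𝕜 V : Type*} [Field 𝕜] [LinearOrder 𝕜] [AddCommGroup V] [Module 𝕜 V]

/-- The intersection of the kernels of the functionals in `Γ` that vanish at `x`. For a point `x` of
the cone on which `Γ` is nonnegative this is the linear span of the face containing `x`. -/
def tightSubspace (Γ : Finset (Module.Dual 𝕜 V)) (x : V) : Submodule 𝕜 V :=
  (Γ.filter fun f => f x = 0).inf LinearMap.ker

lemma mem_tightSubspace {Γ : Finset (Module.Dual 𝕜 V)} {x y : V} :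
    y ∈ tightSubspace Γ x ↔ ∀ f ∈ Γ, f x = 0 → f y = 0 := by
  simp [tightSubspace, Submodule.mem_finsetInf]

variable [IsStrictOrderedRing 𝕜]

lemma exists_ratio_test {ι : Type*} {s : Finset ι} {p q : ι → 𝕜} (hp : ∀ i ∈ s, 0 ≤ p i)
    (hq : ∃ i ∈ s, q i < 0) :
    ∃ t, (∀ i ∈ s, 0 ≤ p i + t * q i) ∧ ∃ i ∈ s, q i < 0 ∧ p i + t * q i = 0 := by
  obtain ⟨i₀, hi₀, hmin⟩ := (s.filter fun i => q i < 0).exists_min_image (fun i => p i / -q i)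
    (by simpa only [Finset.filter_nonempty_iff] using hq)
  obtain ⟨hi₀s, hqi₀⟩ := Finset.mem_filter.1 hi₀
  refine ⟨p i₀ / -q i₀, fun i hi => ?_, i₀, hi₀s, hqi₀, ?_⟩
  · rcases lt_or_ge (q i) 0 with hqi | hqi
    · have hle := (le_div_iff₀ (neg_pos.2 hqi)).1 (hmin i (Finset.mem_filter.2 ⟨hi, hqi⟩))
      linarith
    · exact add_nonneg (hp i hi)
        (mul_nonneg (div_nonneg (hp i₀ hi₀s) (neg_nonneg.2 hqi₀.le)) hqi)
  · have hne : q i₀ ≠ 0 := hqi₀.ne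
    field_simp
    ring

lemma sum_apply_pos {Γ : Finset (Module.Dual 𝕜 V)} (hΓ : ∀ y, (∀ f ∈ Γ, f y = 0) → y = 0)
    {x : V} (hx : ∀ f ∈ Γ, 0 ≤ f x) (hx0 : x ≠ 0) : 0 < (∑ f ∈ Γ, f) x := by
  rw [LinearMap.sum_apply]
  refine (Finset.sum_nonneg hx).lt_of_ne' fun hsum => hx0 (hΓ x ?_)
  exact (Finset.sum_eq_zero_iff_of_nonneg hx).1 hsum

variable [FiniteDimensional 𝕜 V] {Γ : Finset (Module.Dual 𝕜 V)}

lemma exists_mem_tightSubspace_neg (hΓ : ∀ y, (∀ f ∈ Γ, f y = 0) → y = 0) (g : Module.Dual 𝕜 V)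
    {x : V} (hgx : g x ≠ 0) (hrank : Module.finrank 𝕜 (tightSubspace Γ x) ≠ 1) :
    ∃ y ∈ tightSubspace Γ x, g y = 0 ∧ ∃ f ∈ Γ, f y < 0 := by
  have hx : x ∈ tightSubspace Γ x := mem_tightSubspace.2 fun _ _ h => h
  have hrank0 : Module.finrank 𝕜 (tightSubspace Γ x) ≠ 0 := by
    rw [Ne, Submodule.finrank_eq_zero]
    intro hbot
    rw [hbot, Submodule.mem_bot] at hx
    exact hgx (by rw [hx, map_zero])
  have hker : (g.domRestrict (tightSubspace Γ x)).ker ≠ ⊥ := by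
    apply LinearMap.ker_ne_bot_of_finrank_lt
    rw [Module.finrank_self]
    lia
  obtain ⟨⟨y, hy⟩, hgy, hy0⟩ := Submodule.exists_mem_ne_zero_of_ne_bot hker
  obtain ⟨f, hf, hfy⟩ : ∃ f ∈ Γ, f y ≠ 0 := by
    by_contra! h
    exact hy0 (Subtype.ext (hΓ y h))
  rcases hfy.lt_or_gt with hneg | hpos
  · exact ⟨y, hy, hgy, f, hf, hneg⟩
  · exact ⟨-y, neg_mem hy, by rw [map_neg, show g y = 0 from hgy, neg_zero], f, hf, by simpa⟩

lemma exists_neg_of_finrank_tightSubspace_ne_one (hΓ : ∀ y, (∀ f ∈ Γ, f y = 0) → y = 0)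
    {g : Module.Dual 𝕜 V} {x : V} (hx : ∀ f ∈ Γ, 0 ≤ f x) (hgx : g x < 0)
    (hrank : Module.finrank 𝕜 (tightSubspace Γ x) ≠ 1) :
    ∃ z, (∀ f ∈ Γ, 0 ≤ f z) ∧ g z < 0 ∧
      (Γ.filter fun f => f z ≠ 0) ⊂ Γ.filter fun f => f x ≠ 0 := by
  obtain ⟨y, hy, hgy, hneg⟩ := exists_mem_tightSubspace_neg hΓ g hgx.ne hrank
  rw [mem_tightSubspace] at hy
  obtain ⟨t, hnonneg, f, hf, hfy, hfz⟩ := exists_ratio_test hx hneg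
  have happly (φ : Module.Dual 𝕜 V) : φ (x + t • y) = φ x + t * φ y := by simp
  refine ⟨x + t • y, fun φ hφ => by rw [happly]; exact hnonneg φ hφ,
    by rwa [happly, hgy, mul_zero, add_zero], ?_⟩
  refine (Finset.ssubset_iff_of_subset fun φ hφ => ?_).2
    ⟨f, Finset.mem_filter.2 ⟨hf, fun hfx => hfy.ne (hy f hf hfx)⟩, fun hmem => ?_⟩
  · obtain ⟨hφΓ, hφz⟩ := Finset.mem_filter.1 hφ
    refine Finset.mem_filter.2 ⟨hφΓ, fun hφx => hφz ?_⟩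
    rw [happly, hφx, hy φ hφΓ hφx, mul_zero, add_zero]
  · exact (Finset.mem_filter.1 hmem).2 ((happly f).trans hfz)

theorem exists_finrank_tightSubspace_eq_one_neg (hΓ : ∀ y, (∀ f ∈ Γ, f y = 0) → y = 0)
    {g : Module.Dual 𝕜 V} {x : V} (hx : ∀ f ∈ Γ, 0 ≤ f x) (hgx : g x < 0) :
    ∃ r, (∀ f ∈ Γ, 0 ≤ f r) ∧ g r < 0 ∧ Module.finrank 𝕜 (tightSubspace Γ r) = 1 := by
  induction hN : Γ.filter (fun f => f x ≠ 0) using Finset.strongInduction generalizing x with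
  | H N ih =>
    by_cases hrank : Module.finrank 𝕜 (tightSubspace Γ x) = 1
    · exact ⟨x, hx, hgx, hrank⟩
    · obtain ⟨z, hz, hgz, hlt⟩ := exists_neg_of_finrank_tightSubspace_ne_one hΓ hx hgx hrank
      exact ih _ (hN ▸ hlt) hz hgz rfl

end ExtremeRays

lemma sign_eq_sign_iff {R : Type*} [Ring R] [LinearOrder R] [IsStrictOrderedRing R] {a b : R} :
    SignType.sign a = SignType.sign b ↔ 0 < a * b ∨ a = 0 ∧ b = 0 := by
  rw [← sign_eq_one_iff, sign_mul, ← sign_eq_zero_iff, ← sign_eq_zero_iff (a := b)]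
  generalize SignType.sign a = s
  generalize SignType.sign b = t
  revert s t
  decide

lemma exists_eq_smul_of_ker_eq {K E : Type*} [Field K] [AddCommGroup E] [Module K E]
    {f g : Module.Dual K E} (h : LinearMap.ker f = LinearMap.ker g) : ∃ c : K, f = c • g := by
  have hmem : f ∈ Submodule.span K (Set.range fun _ : Unit => g) :=
    mem_span_of_iInf_ker_le_ker (by rw [iInf_const, h])
  rw [Set.range_const, Submodule.mem_span_singleton] at hmem
  exact hmem.imp fun _ => Eq.symm

lemma finrank_continuousDual {V : Type*} [NormedAddCommGroup V] [NormedSpace ℝ V]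
    [FiniteDimensional ℝ V] :
    Module.finrank ℝ (V →L[ℝ] ℝ) = Module.finrank ℝ V :=
  (LinearMap.toContinuousLinearMap (𝕜 := ℝ) (E := V) (F' := ℝ)).finrank_eq.symm.trans
    Subspace.dual_finrank_eq

section ClosedFace

variable {V : Type*} [AddCommGroup V] [Module ℝ V]

/-- The closure of the face of `H` containing `x`, as the cone cut out by the closed half-spaces
containing `x` that are bounded by hyperplanes of `H`. -/
def closedFace (H : Finset (Submodule ℝ V)) (x : V) : Set V :=
  {z | ∀ W ∈ H, ∀ f : Module.Dual ℝ V, LinearMap.ker f = W → 0 ≤ f x → 0 ≤ f z}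

variable {H : Finset (Submodule ℝ V)}

lemma SameFace.mem_closedFace {x y : V} (h : SameFace H x y) : y ∈ closedFace H x := by
  intro W hW f hf hfx
  rcases h W hW f hf with hpos | ⟨-, hy⟩
  · exact (pos_of_mul_pos_right hpos hfx).le
  · exact hy.ge

lemma smul_mem_closedFace {x z : V} {c : ℝ} (hc : 0 ≤ c) (hz : z ∈ closedFace H x) :
    c • z ∈ closedFace H x := fun W hW f hf hfx => by
  rw [map_smul]
  exact smul_nonneg hc (hz W hW f hf hfx)

lemma sameFace_add_smul {x z : V} (hz : z ∈ closedFace H x) {s : ℝ} (hs : 0 < s) :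
    SameFace H x (z + s • x) := by
  intro W hW f hf
  have hneg : f x ≤ 0 → f z ≤ 0 := fun hfx => by
    simpa using hz W hW (-f) ((LinearMap.ker_neg f).trans hf) (by simpa using hfx)
  have hpos : 0 ≤ f x → 0 ≤ f z := hz W hW f hf
  rw [map_add, map_smul, smul_eq_mul]
  rcases lt_trichotomy (f x) 0 with hfx | hfx | hfx
  · exact .inl (mul_pos_of_neg_of_neg hfx
      (add_neg_of_nonpos_of_neg (hneg hfx.le) (mul_neg_of_pos_of_neg hs hfx)))
  · exact .inr ⟨hfx, by rw [hfx, mul_zero, add_zero, (hneg hfx.le).antisymm (hpos hfx.ge)]⟩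
  · exact .inl (mul_pos hfx (add_pos_of_nonneg_of_pos (hpos hfx.le) (mul_pos hs hfx)))

lemma nonneg_on_closedFace {g : Module.Dual ℝ V} {x z : V} (hg : ∀ y, SameFace H x y → 0 ≤ g y)
    (hz : z ∈ closedFace H x) : 0 ≤ g z := by
  by_contra! hgz
  obtain ⟨s, hs, hneg⟩ := exists_pos_add_smul_mem isOpen_Iio (Set.mem_Iio.2 hgz) (g x)
  have hnonneg := hg _ (sameFace_add_smul hz hs)
  rw [map_add, map_smul] at hnonneg
  exact hneg.not_ge hnonneg

lemma mem_closedFace_iff {φ : Submodule ℝ V → Module.Dual ℝ V}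
    (hφ : ∀ W ∈ H, LinearMap.ker (φ W) = W) {x z : V} :
    z ∈ closedFace H x ↔
      ∀ W ∈ H, (0 ≤ φ W x → 0 ≤ φ W z) ∧ (0 ≤ (-φ W) x → 0 ≤ (-φ W) z) := by
  refine ⟨fun hz W hW => ⟨hz W hW _ (hφ W hW),
    hz W hW _ ((LinearMap.ker_neg _).trans (hφ W hW))⟩, fun h W hW f hf hfx => ?_⟩
  obtain ⟨c, rfl⟩ := exists_eq_smul_of_ker_eq (hf.trans (hφ W hW).symm)
  obtain ⟨hpos, hneg⟩ := h W hW
  rcases lt_trichotomy c 0 with hc | rfl | hc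
  · rw [LinearMap.neg_apply, LinearMap.neg_apply, neg_nonneg, neg_nonneg] at hneg
    rw [LinearMap.smul_apply, smul_eq_mul] at hfx ⊢
    exact mul_nonneg_of_nonpos_of_nonpos hc.le (hneg (nonpos_of_mul_nonneg_right hfx hc))
  · simp
  · rw [LinearMap.smul_apply, smul_eq_mul] at hfx ⊢
    exact mul_nonneg hc.le (hpos (nonneg_of_mul_nonneg_right hfx hc))

lemma exists_finset_dual_closedFace (hHyp : ∀ W ∈ H, ∃ f : Module.Dual ℝ V, LinearMap.ker f = W)
    (hEss : ∀ y, (∀ W ∈ H, y ∈ W) → y = 0) (x : V) :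
    ∃ Γ : Finset (Module.Dual ℝ V), (∀ f ∈ Γ, LinearMap.ker f ∈ H) ∧
      (∀ z, z ∈ closedFace H x ↔ ∀ f ∈ Γ, 0 ≤ f z) ∧ ∀ y, (∀ f ∈ Γ, f y = 0) → y = 0 := by
  classical
  choose! φ hφ using hHyp
  have hmem (f : Module.Dual ℝ V) :
      f ∈ (H.image φ ∪ H.image (-φ)).filter (fun f => 0 ≤ f x) ↔
        (∃ W ∈ H, φ W = f ∨ -φ W = f) ∧ 0 ≤ f x := by
    simp only [Finset.mem_filter, Finset.mem_union, Finset.mem_image, Pi.neg_apply, ← exists_or,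
      ← and_or_left]
  refine ⟨(H.image φ ∪ H.image (-φ)).filter fun f => 0 ≤ f x, fun f hf => ?_, fun z => ?_,
    fun y hy => hEss y fun W hW => ?_⟩
  · obtain ⟨⟨W, hW, rfl | rfl⟩, -⟩ := (hmem f).1 hf
    · rwa [hφ W hW]
    · rwa [LinearMap.ker_neg, hφ W hW]
  · rw [mem_closedFace_iff hφ]
    constructor
    · intro hz f hf
      obtain ⟨⟨W, hW, rfl | rfl⟩, hfx⟩ := (hmem f).1 hf
      · exact (hz W hW).1 hfx
      · exact (hz W hW).2 hfx
    · exact fun hz W hW => ⟨fun hfx => hz _ ((hmem _).2 ⟨⟨W, hW, .inl rfl⟩, hfx⟩),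
        fun hfx => hz _ ((hmem _).2 ⟨⟨W, hW, .inr rfl⟩, hfx⟩)⟩
  · rw [← hφ W hW, LinearMap.mem_ker]
    rcases le_total 0 (φ W x) with hx | hx
    · exact hy _ ((hmem _).2 ⟨⟨W, hW, .inl rfl⟩, hx⟩)
    · simpa using hy _ ((hmem _).2 ⟨⟨W, hW, .inr rfl⟩, by simpa using hx⟩)

lemma exists_dual_pos_on_closedFace (hHyp : ∀ W ∈ H, ∃ f : Module.Dual ℝ V, LinearMap.ker f = W)
    (hEss : ∀ y, (∀ W ∈ H, y ∈ W) → y = 0) (x : V) :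
    ∃ e : Module.Dual ℝ V, ∀ z ∈ closedFace H x, z ≠ 0 → 0 < e z := by
  obtain ⟨Γ, -, hΓ, hpointed⟩ := exists_finset_dual_closedFace hHyp hEss x
  exact ⟨∑ f ∈ Γ, f, fun z hz => sum_apply_pos hpointed ((hΓ z).1 hz)⟩

lemma isFlat_tightSubspace {Γ : Finset (Module.Dual ℝ V)} (hΓ : ∀ f ∈ Γ, LinearMap.ker f ∈ H)
    (x : V) : IsFlat H (tightSubspace Γ x) := by
  classical
  refine ⟨(Γ.filter fun f => f x = 0).image LinearMap.ker, ?_, by rw [Finset.inf_image]; rfl⟩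
  exact Finset.image_subset_iff.2 fun f hf => hΓ f (Finset.mem_filter.1 hf).1

theorem exists_mem_closedFace_flat_neg [FiniteDimensional ℝ V]
    (hHyp : ∀ W ∈ H, ∃ f : Module.Dual ℝ V, LinearMap.ker f = W)
    (hEss : ∀ y, (∀ W ∈ H, y ∈ W) → y = 0) {g : Module.Dual ℝ V} {x z : V}
    (hz : z ∈ closedFace H x) (hgz : g z < 0) :
    ∃ r ∈ closedFace H x, g r < 0 ∧ ∃ l, IsFlat H l ∧ Module.finrank ℝ l = 1 ∧ r ∈ l := by
  obtain ⟨Γ, hker, hΓ, hpointed⟩ := exists_finset_dual_closedFace hHyp hEss x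
  obtain ⟨r, hr, hgr, hrank⟩ :=
    exists_finrank_tightSubspace_eq_one_neg hpointed ((hΓ z).1 hz) hgz
  exact ⟨r, (hΓ r).2 hr, hgr, tightSubspace Γ r, isFlat_tightSubspace hker r, hrank,
    mem_tightSubspace.2 fun _ _ h => h⟩

end ClosedFace

section Rays

variable {V : Type*} [NormedAddCommGroup V] [NormedSpace ℝ V]

/-- The unit vectors in the one-dimensional flats of `H`. They encode the two rays of each such
flat, so that the hyperplanes of the dual arrangement are the kernels of evaluation at these
vectors. -/
def unitRays (H : Finset (Submodule ℝ V)) : Set V :=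
  {r | ‖r‖ = 1 ∧ ∃ l : Submodule ℝ V, IsFlat H l ∧ Module.finrank ℝ l = 1 ∧ r ∈ l}

/-- Evaluation at the rays of `H`, the family of functionals on the dual space that defines the dual
arrangement. -/
noncomputable def rayEval (H : Finset (Submodule ℝ V)) : unitRays H → (V →L[ℝ] ℝ) →L[ℝ] ℝ :=
  fun r => ContinuousLinearMap.apply ℝ ℝ (r : V)

variable {H : Finset (Submodule ℝ V)}

lemma unitRays_ne_zero (r : unitRays H) : (r : V) ≠ 0 :=
  norm_ne_zero_iff.1 (r.2.1.trans_ne one_ne_zero)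

lemma exists_unitRays_smul {l : Submodule ℝ V} (hl : IsFlat H l) (hrank : Module.finrank ℝ l = 1)
    {x : V} (hx : x ∈ l) (hx0 : x ≠ 0) : ∃ (r : unitRays H) (c : ℝ), 0 < c ∧ x = c • (r : V) := by
  have hnorm : ‖x‖ ≠ 0 := norm_ne_zero_iff.2 hx0
  exact ⟨⟨‖x‖⁻¹ • x, by rw [norm_smul, norm_inv, norm_norm, inv_mul_cancel₀ hnorm],
    l, hl, hrank, l.smul_mem _ hx⟩, ‖x‖, norm_pos_iff.2 hx0, (smul_inv_smul₀ hnorm x).symm⟩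

lemma finite_setOf_mem_norm_eq_of_finrank_eq_one {l : Submodule ℝ V}
    (hl : Module.finrank ℝ l = 1) (ρ : ℝ) : {r | r ∈ l ∧ ‖r‖ = ρ}.Finite := by
  obtain ⟨⟨g, hg⟩, hg0, hspan⟩ := finrank_eq_one_iff'.1 hl
  have hnorm : ‖g‖ ≠ 0 := norm_ne_zero_iff.2 fun h => hg0 (Subtype.ext h)
  refine (Set.toFinite {(ρ / ‖g‖) • g, (-(ρ / ‖g‖)) • g}).subset ?_
  rintro r ⟨hr, hrρ⟩
  obtain ⟨c, hc⟩ := hspan ⟨r, hr⟩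
  obtain rfl : c • g = r := congrArg Subtype.val hc
  rw [norm_smul, Real.norm_eq_abs, ← eq_div_iff hnorm] at hrρ
  rcases abs_choice c with h | h
  · exact .inl (by rw [← hrρ, h])
  · exact .inr (by rw [← hrρ, h, neg_neg]; rfl)

lemma finite_setOf_isFlat (H : Finset (Submodule ℝ V)) : {l | IsFlat H l}.Finite := by
  refine (H.powerset.finite_toSet.image fun J => J.inf id).subset ?_
  rintro l ⟨J, hJ, rfl⟩
  exact ⟨J, Finset.mem_coe.2 (Finset.mem_powerset.2 hJ), rfl⟩

lemma finite_unitRays (H : Finset (Submodule ℝ V)) : (unitRays H).Finite := by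
  have hflats : {l | IsFlat H l ∧ Module.finrank ℝ l = 1}.Finite :=
    (finite_setOf_isFlat H).subset fun l hl => hl.1
  refine (hflats.biUnion fun l hl => finite_setOf_mem_norm_eq_of_finrank_eq_one hl.2 1).subset ?_
  rintro r ⟨hr, l, hl, hrank, hrl⟩
  exact Set.mem_biUnion (show l ∈ _ from ⟨hl, hrank⟩) ⟨hrl, hr⟩

noncomputable instance : Fintype (unitRays H) :=
  (finite_unitRays H).fintype

lemma dualSameFace_iff_signVector_eq {f g : V →L[ℝ] ℝ} :
    DualSameFace H f g ↔ signVector (rayEval H) f = signVector (rayEval H) g := by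
  constructor
  · intro h
    funext r
    obtain ⟨-, l, hl, hrank, hr⟩ := r.2
    exact sign_eq_sign_iff.2 (h l hl hrank r hr)
  · intro h l hl hrank x hx
    rw [← sign_eq_sign_iff]
    rcases eq_or_ne x 0 with rfl | hx0
    · rw [f.map_zero, g.map_zero]
    · obtain ⟨r, c, -, rfl⟩ := exists_unitRays_smul hl hrank hx hx0
      have hr : SignType.sign (f r) = SignType.sign (g r) := congrFun h r
      simp only [map_smul, smul_eq_mul, sign_mul, hr]

lemma setOf_dualSameFace (H : Finset (Submodule ℝ V)) (f : V →L[ℝ] ℝ) :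
    {g | DualSameFace H f g} = signCell (rayEval H) (signVector (rayEval H) f) := by
  ext g
  exact dualSameFace_iff_signVector_eq.trans eq_comm

lemma isDualChamber_signCell {f : V →L[ℝ] ℝ} (hf : ∀ r, rayEval H r f ≠ 0) :
    IsDualChamber H (signCell (rayEval H) (signVector (rayEval H) f)) :=
  ⟨⟨f, (setOf_dualSameFace H f).symm⟩, by
    rw [signCell_eq_openStar hf]; exact isOpen_openStar _ f⟩

lemma rayEval_ne_zero (r : unitRays H) : rayEval H r ≠ 0 := fun h => by
  obtain ⟨f, -, hf⟩ := exists_dual_vector ℝ (r : V) (r.2.1.trans_ne one_ne_zero)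
  have hr : f r = 0 := DFunLike.congr_fun h f
  simp [hf, r.2.1] at hr

theorem smallCone_setOf_dualSameFace (H : Finset (Submodule ℝ V)) (a : V →L[ℝ] ℝ) :
    smallCone H {g | DualSameFace H a g} = bigCone (openStar (rayEval H) a) := by
  refine subset_antisymm (fun x hx f hf => ?_) (Set.subset_iInter₂ fun C hC x hx f hf => ?_)
  · by_contra! hneg
    have hopen : IsOpen (openStar (rayEval H) a ∩ {g | g x < 0}) :=
      (isOpen_openStar _ a).inter
        (isOpen_lt (ContinuousLinearMap.apply ℝ ℝ x).continuous continuous_const)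
    obtain ⟨g, ⟨hga, hgx⟩, hg⟩ :=
      (dense_setOf_forall_apply_ne_zero (rayEval_ne_zero (H := H))).inter_open_nonempty _ hopen
        ⟨f, hf, hneg⟩
    have hclosure : {g | DualSameFace H a g} ⊆
        closure (signCell (rayEval H) (signVector (rayEval H) g)) := by
      rwa [setOf_dualSameFace, signCell_subset_closure_signCell_iff]
    exact hgx.not_ge (Set.mem_iInter₂.1 hx _ ⟨isDualChamber_signCell hg, hclosure⟩ g rfl)
  · obtain ⟨⟨⟨c, rfl⟩, -⟩, hclosure⟩ := hC
    rw [setOf_dualSameFace, setOf_dualSameFace, signCell_subset_closure_signCell_iff] at hclosure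
    rw [setOf_dualSameFace] at hf
    exact hx f ((mem_openStar_congr hf).2 hclosure)

end Rays

section FaceRays

variable {V : Type*} [NormedAddCommGroup V] [NormedSpace ℝ V] {H : Finset (Submodule ℝ V)}

open Classical in
/-- The rays of `H` that lie in the closure of the face containing `x`. -/
noncomputable def faceRays (H : Finset (Submodule ℝ V)) (x : V) : Finset (unitRays H) :=
  Finset.univ.filter fun r => (r : V) ∈ closedFace H x

lemma mem_faceRays {x : V} {r : unitRays H} : r ∈ faceRays H x ↔ (r : V) ∈ closedFace H x := by
  simp [faceRays]

theorem setOf_sameFace_subset_bigCone_iff [FiniteDimensional ℝ V]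
    (hHyp : ∀ W ∈ H, ∃ f : Module.Dual ℝ V, LinearMap.ker f = W)
    (hEss : ∀ y, (∀ W ∈ H, y ∈ W) → y = 0) (x : V) (S : Set (V →L[ℝ] ℝ)) :
    {y | SameFace H x y} ⊆ bigCone S ↔ ∀ f ∈ S, ∀ r ∈ faceRays H x, 0 ≤ rayEval H r f := by
  constructor
  · intro h f hf r hr
    exact nonneg_on_closedFace (g := f.toLinearMap) (fun y hy => h hy f hf) (mem_faceRays.1 hr)
  · intro h y hy f hf
    by_contra! hneg
    obtain ⟨z, hz, hfz, l, hl, hrank, hzl⟩ :=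
      exists_mem_closedFace_flat_neg hHyp hEss (g := f.toLinearMap)
        (SameFace.mem_closedFace hy) hneg
    have hz0 : z ≠ 0 := by
      rintro rfl
      exact hfz.ne (map_zero f)
    obtain ⟨r, c, hc, rfl⟩ := exists_unitRays_smul hl hrank hzl hz0
    have hr : r ∈ faceRays H x := mem_faceRays.2 <| by
      simpa [hc.ne'] using smul_mem_closedFace (inv_nonneg.2 hc.le) hz
    refine hfz.not_ge ?_
    rw [map_smul]
    exact smul_nonneg hc.le (h f hf r hr)

lemma exists_rayEval_pos [FiniteDimensional ℝ V]
    (hHyp : ∀ W ∈ H, ∃ f : Module.Dual ℝ V, LinearMap.ker f = W)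
    (hEss : ∀ y, (∀ W ∈ H, y ∈ W) → y = 0) (x : V) :
    ∃ e : V →L[ℝ] ℝ, ∀ r ∈ faceRays H x, 0 < rayEval H r e := by
  obtain ⟨e, he⟩ := exists_dual_pos_on_closedFace hHyp hEss x
  exact ⟨e.toContinuousLinearMap, fun r hr => he r (mem_faceRays.1 hr) (unitRays_ne_zero r)⟩

theorem setOf_sameFace_subset_smallCone_iff [FiniteDimensional ℝ V]
    (hHyp : ∀ W ∈ H, ∃ f : Module.Dual ℝ V, LinearMap.ker f = W)
    (hEss : ∀ y, (∀ W ∈ H, y ∈ W) → y = 0) (x : V) (a : V →L[ℝ] ℝ) :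
    {y | SameFace H x y} ⊆ smallCone H {g | DualSameFace H a g} ↔
      ∀ r ∈ faceRays H x, 0 < rayEval H r a := by
  rw [smallCone_setOf_dualSameFace, setOf_sameFace_subset_bigCone_iff hHyp hEss]
  constructor
  · intro h r hr
    obtain ⟨e, he⟩ := exists_rayEval_pos hHyp hEss x
    obtain ⟨t, ht, hmem⟩ := exists_pos_add_smul_mem (isOpen_openStar (rayEval H) a)
      (self_mem_openStar _ a) (-e)
    have hnonneg := h _ hmem r hr
    rw [map_add, map_smul, map_neg, smul_eq_mul] at hnonneg
    linarith [mul_pos ht (he r hr)]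
  · intro h f hf r hr
    have hsign := hf r (h r hr).ne'
    rw [sign_pos (h r hr), sign_eq_one_iff] at hsign
    exact hsign.le

open Classical in
lemma isDualFace_and_subset_closure_and_subset_bigCone_iff [FiniteDimensional ℝ V]
    (hHyp : ∀ W ∈ H, ∃ f : Module.Dual ℝ V, LinearMap.ker f = W)
    (hEss : ∀ y, (∀ W ∈ H, y ∈ W) → y = 0) (a : V →L[ℝ] ℝ) (x : V) (C : Set (V →L[ℝ] ℝ)) :
    IsDualFace H C ∧ {g | DualSameFace H a g} ⊆ closure C ∧ {y | SameFace H x y} ⊆ bigCone C ↔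
      C.Nonempty ∧ ∃ σ ∈ Finset.univ.filter fun σ : unitRays H → SignType =>
        ∀ r ∈ faceRays H x, σ r ≠ -1, C = openStar (rayEval H) a ∩ signCell (rayEval H) σ := by
  rw [setOf_sameFace_subset_bigCone_iff hHyp hEss]
  simp only [Finset.mem_filter_univ]
  constructor
  · rintro ⟨⟨f, rfl⟩, hclosure, hnonneg⟩
    rw [setOf_dualSameFace] at hnonneg ⊢
    rw [setOf_dualSameFace, setOf_dualSameFace, signCell_subset_closure_signCell_iff] at hclosure
    exact ⟨⟨f, rfl⟩, signVector (rayEval H) f,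
      fun r hr h => (hnonneg f rfl r hr).not_gt (sign_eq_neg_one_iff.1 h),
      (Set.inter_eq_right.2 fun g hg => (mem_openStar_congr hg).2 hclosure).symm⟩
  · rintro ⟨⟨f, hf⟩, σ, hσ, rfl⟩
    obtain ⟨hfa, rfl⟩ := hf
    have hcell : openStar (rayEval H) a ∩ signCell (rayEval H) (signVector (rayEval H) f) =
        signCell (rayEval H) (signVector (rayEval H) f) :=
      Set.inter_eq_right.2 fun g hg => (mem_openStar_congr hg).2 hfa
    rw [hcell, setOf_dualSameFace, signCell_subset_closure_signCell_iff]
    refine ⟨⟨f, (setOf_dualSameFace H f).symm⟩, hfa, fun g hg r hr => ?_⟩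
    by_contra! hneg
    exact hσ r hr ((congrFun hg r).symm.trans (sign_neg hneg))

theorem sum_neg_one_pow_dualFaces [FiniteDimensional ℝ V]
    (hHyp : ∀ W ∈ H, ∃ f : Module.Dual ℝ V, LinearMap.ker f = W)
    (hEss : ∀ y, (∀ W ∈ H, y ∈ W) → y = 0) (a : V →L[ℝ] ℝ) (x : V) {F : Finset (Set (V →L[ℝ] ℝ))}
    (hF : ∀ C, C ∈ F ↔
      IsDualFace H C ∧ {g | DualSameFace H a g} ⊆ closure C ∧ {y | SameFace H x y} ⊆ bigCone C) :
    ∑ C ∈ F, (-1 : ℤ) ^ (Module.finrank ℝ V - Module.finrank ℝ (Submodule.span ℝ C)) =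
      if ∀ r ∈ faceRays H x, 0 < rayEval H r a then 1 else 0 := by
  classical
  obtain ⟨e, he⟩ := exists_rayEval_pos hHyp hEss x
  have hmem (C : Set (V →L[ℝ] ℝ)) := (hF C).trans
    (isDualFace_and_subset_closure_and_subset_bigCone_iff hHyp hEss a x C)
  have hterm : ∀ C ∈ F,
      (-1 : ℤ) ^ (Module.finrank ℝ V - Module.finrank ℝ (Submodule.span ℝ C)) =
        (-1) ^ Module.finrank ℝ V * cellEuler C := fun C hC => by
    simpa only [finrank_continuousDual] using neg_one_pow_codim_eq_mul_cellEuler ((hmem C).1 hC).1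
  rw [Finset.sum_congr rfl hterm, ← Finset.mul_sum, sum_cellEuler_eq_sum_signCell _ hmem,
    sum_cellEuler_openStar_inter_signCell _ a he, finrank_continuousDual, mul_ite, ← mul_pow]
  simp

end FaceRays

/-- weighted face count over a dual face: for a dual face `A∨` and
a face `B` of `H`, the sum `Σ (−1)^{n − dim B∨}` over dual faces `B∨ ≥ A∨` with
`B ⊆ U(B∨)` equals `1` if `B ⊆ V(A∨)` and `0` otherwise. -/
theorem statement14 {V : Type*} [NormedAddCommGroup V] [NormedSpace ℝ V]
    [FiniteDimensional ℝ V] (H : Finset (Submodule ℝ V))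
    (hHyp : ∀ W ∈ H, ∃ f : V →ₗ[ℝ] ℝ, f ≠ 0 ∧ LinearMap.ker f = W)
    (hEss : (⋂ W ∈ H, (W : Set V)) = {0})
    (A : Set (V →L[ℝ] ℝ)) (hA : IsDualFace H A)
    (B : Set V) (hB : IsFace H B)
    (F : Finset (Set (V →L[ℝ] ℝ)))
    (hF : ∀ C : Set (V →L[ℝ] ℝ),
      C ∈ F ↔ IsDualFace H C ∧ A ⊆ closure C ∧ B ⊆ bigCone C) :
    (B ⊆ smallCone H A →
      ∑ C ∈ F,
        (-1 : ℤ) ^ (Module.finrank ℝ V - Module.finrank ℝ (Submodule.span ℝ C)) = 1) ∧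
    (¬ B ⊆ smallCone H A →
      ∑ C ∈ F,
        (-1 : ℤ) ^ (Module.finrank ℝ V - Module.finrank ℝ (Submodule.span ℝ C)) = 0) := by
  classical
  obtain ⟨a, rfl⟩ := hA
  obtain ⟨x, rfl⟩ := hB
  have hKer : ∀ W ∈ H, ∃ f : Module.Dual ℝ V, LinearMap.ker f = W :=
    fun W hW => (hHyp W hW).imp fun _ h => h.2
  have hPointed : ∀ y, (∀ W ∈ H, y ∈ W) → y = 0 := fun y hy => by
    have hmem : y ∈ ⋂ W ∈ H, (W : Set V) := Set.mem_iInter₂.2 hy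
    rwa [hEss] at hmem
  rw [setOf_sameFace_subset_smallCone_iff hKer hPointed,
    sum_neg_one_pow_dualFaces hKer hPointed a x hF]
  exact ⟨fun h => if_pos h, fun h => if_neg h⟩
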